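/- arXiv:2110.01697 — 3 statements merged into one kernel-verified Lean document; each statement's English description precedes it below -/
import Mathlib

section
/- Let n, p, q be positive integers, A a real p×n matrix and B a real q×n matrix. At every feasible point v = (C, ζ, z, α, ξ) of the MPEC, the following finite family of vectors in ℝ^{1+2p+2q} (coordinates grouped as (C, ζ, z, α, ξ)) is positive-linearly independent: (i) for each index i with (ABᵀα+z)_i = 0, the vector (0, 0, e_i, (ABᵀ)_{i·}, 0); (ii) for each i with 1 − ζ_i = 0, the vector (0, −e_i, 0, 0, 0); (iii) for each i with (BBᵀα−1+ξ)_i = 0, the vector (0, 0, 0, (BBᵀ)_{i·}, e_i); (iv) for each i with C − α_i = 0, the vector (1, 0, 0, −e_i, 0); (v) for each i with ζ_i = 0, the vector (0, e_i, 0, 0, 0); (vi) for each i with z_i = 0, the vector (0, 0, e_i, 0, 0); (vii) for each i with α_i = 0, the vector (0, 0, 0, e_i, 0); (viii) for each i with ξ_i = 0, the vector (0, 0, 0, 0, e_i). (This is exactly the statement that the MPEC-tailored Mangasarian–Fromovitz constraint qualification holds at every feasible point of the MPEC, since the constraint functions are affine and these vectors are the gradients of the constraint components that vanish at v.) -/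
open Matrix Finset

/-- The MPEC-MFCQ holds at every feasible point of the MPEC: the family of
gradients of the active constraint components is positive-linearly independent.
The vectors live in ℝ^{1+2p+2q}, with coordinates grouped as (C, ζ, z, α, ξ);
the coefficient functions λ₁,…,λ₈ are supported on the corresponding active
index sets, and the linear combination being zero is stated componentwise. -/
theorem mpec_mfcq_holds_at_every_feasible_point
    (n p q : ℕ) (hn : 0 < n) (hp : 0 < p) (hq : 0 < q)
    (A : Matrix (Fin p) (Fin n) ℝ) (B : Matrix (Fin q) (Fin n) ℝ)
    (C : ℝ) (ζ z : Fin p → ℝ) (α ξ : Fin q → ℝ)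
    (g : Fin p → ℝ) (hg : g = (A * Bᵀ).mulVec α + z)
    (h : Fin q → ℝ) (hh : h = (B * Bᵀ).mulVec α - 1 + ξ)
    -- feasibility of v = (C, ζ, z, α, ξ) for the MPEC
    (hfeas1 : ∀ i, 0 ≤ ζ i ∧ 0 ≤ g i ∧ ζ i * g i = 0)
    (hfeas2 : ∀ i, 0 ≤ z i ∧ 0 ≤ 1 - ζ i ∧ z i * (1 - ζ i) = 0)
    (hfeas3 : ∀ i, 0 ≤ α i ∧ 0 ≤ h i ∧ α i * h i = 0)
    (hfeas4 : ∀ i, 0 ≤ ξ i ∧ 0 ≤ C - α i ∧ ξ i * (C - α i) = 0)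
    -- nonnegative coefficients of the family members
    (lam₁ lam₂ lam₅ lam₆ : Fin p → ℝ) (lam₃ lam₄ lam₇ lam₈ : Fin q → ℝ)
    (hl₁ : ∀ i, 0 ≤ lam₁ i) (hl₂ : ∀ i, 0 ≤ lam₂ i)
    (hl₃ : ∀ i, 0 ≤ lam₃ i) (hl₄ : ∀ i, 0 ≤ lam₄ i)
    (hl₅ : ∀ i, 0 ≤ lam₅ i) (hl₆ : ∀ i, 0 ≤ lam₆ i)
    (hl₇ : ∀ i, 0 ≤ lam₇ i) (hl₈ : ∀ i, 0 ≤ lam₈ i)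
    -- each coefficient is supported on the corresponding active index set:
    -- (i) (ABᵀα+z)_i = 0, (ii) 1-ζ_i = 0, (iii) (BBᵀα-1+ξ)_i = 0,
    -- (iv) C-α_i = 0, (v) ζ_i = 0, (vi) z_i = 0, (vii) α_i = 0, (viii) ξ_i = 0
    (hs₁ : ∀ i, g i ≠ 0 → lam₁ i = 0)
    (hs₂ : ∀ i, 1 - ζ i ≠ 0 → lam₂ i = 0)
    (hs₃ : ∀ i, h i ≠ 0 → lam₃ i = 0)
    (hs₄ : ∀ i, C - α i ≠ 0 → lam₄ i = 0)
    (hs₅ : ∀ i, ζ i ≠ 0 → lam₅ i = 0)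
    (hs₆ : ∀ i, z i ≠ 0 → lam₆ i = 0)
    (hs₇ : ∀ i, α i ≠ 0 → lam₇ i = 0)
    (hs₈ : ∀ i, ξ i ≠ 0 → lam₈ i = 0)
    -- the nonnegative combination of the family vectors is zero, componentwise:
    -- C-component, ζ-component, z-component, α-component, ξ-component
    (hCcomp : (∑ i, lam₄ i) = 0)
    (hζcomp : ∀ j, lam₅ j - lam₂ j = 0)
    (hzcomp : ∀ j, lam₁ j + lam₆ j = 0)
    (hαcomp : ∀ j, (∑ i, lam₁ i * (A * Bᵀ) i j) + (∑ i, lam₃ i * (B * Bᵀ) i j)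
        - lam₄ j + lam₇ j = 0)
    (hξcomp : ∀ j, lam₃ j + lam₈ j = 0) :
    (∀ i, lam₁ i = 0) ∧ (∀ i, lam₂ i = 0) ∧ (∀ i, lam₃ i = 0) ∧
    (∀ i, lam₄ i = 0) ∧ (∀ i, lam₅ i = 0) ∧ (∀ i, lam₆ i = 0) ∧
    (∀ i, lam₇ i = 0) ∧ (∀ i, lam₈ i = 0) := by
  have h1 : ∀ i, lam₁ i = 0 := fun i => by linarith [hl₁ i, hl₆ i, hzcomp i]
  have h6 : ∀ i, lam₆ i = 0 := fun i => by linarith [hl₁ i, hl₆ i, hzcomp i]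
  have h3 : ∀ i, lam₃ i = 0 := fun i => by linarith [hl₃ i, hl₈ i, hξcomp i]
  have h8 : ∀ i, lam₈ i = 0 := fun i => by linarith [hl₃ i, hl₈ i, hξcomp i]
  have h4 : ∀ i, lam₄ i = 0 := fun i =>
    (Finset.sum_eq_zero_iff_of_nonneg (fun i _ => hl₄ i)).1 hCcomp i (Finset.mem_univ i)
  have h7 : ∀ i, lam₇ i = 0 := fun i => by
    have := hαcomp i
    simpa [h1, h3, h4] using this
  have h5 : ∀ i, lam₅ i = 0 := fun i => by
    by_cases hz : ζ i = 0
    · have := hs₂ i (by rw [hz]; norm_num)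
      linarith [hζcomp i]
    · exact hs₅ i hz
  have h2 : ∀ i, lam₂ i = 0 := fun i => by linarith [hζcomp i, h5 i]
  exact ⟨h1, h2, h3, h4, h5, h6, h7, h8⟩
end

section
/- Let Q be a finite index set partitioned into pairwise disjoint subsets Λ₁, Λ₂, Λ₃⁺, Λ₃ᶜ, Λ_u whose union is Q, let n be a positive integer, let B be a real Q×n matrix, and set M = BBᵀ. Then the family of vectors in ℝ^Q × ℝ^Q consisting of (M_{i·}, e_i) for each i ∈ Λ₃⁺ ∪ Λ₃ᶜ ∪ Λ_u, (M_{i·}, e_i) for each i ∈ Λ₁, (e_i, 0) for each i ∈ Λ₁, (e_i, 0) for each i ∈ Λ₂, (0, e_i) for each i ∈ Λ₃ᶜ, and (0, e_i) for each i ∈ Λ₁ ∪ Λ₂ ∪ Λ₃⁺, is positive-linearly independent: any nonnegative coefficients ρᵍ (over Λ₃⁺ ∪ Λ₃ᶜ ∪ Λ_u), ρʰ and ρⁱ (over Λ₁), ρʲ (over Λ₂), ρᵐ (over Λ₃ᶜ) and ρⁿ (over Λ₁ ∪ Λ₂ ∪ Λ₃⁺) whose corresponding combination of these vectors is zero must all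 vanish. -/
open Matrix Finset

theorem sum_single_apply_aux {ι : Type*} [Fintype ι] [DecidableEq ι] (S : Finset ι)
    (ρ : ι → ℝ) (k : ι) :
    (∑ i ∈ S, ρ i • (Pi.single i 1 : ι → ℝ)) k = if k ∈ S then ρ k else 0 := by
  simp [Finset.sum_apply, Pi.single_apply]

theorem ite_nonneg_aux {ι : Type*} [DecidableEq ι] (S : Finset ι)
    (ρ : ι → ℝ) (h : ∀ i ∈ S, 0 ≤ ρ i) (k : ι) : 0 ≤ if k ∈ S then ρ k else 0 := by
  split_ifs with hk
  · exact h k hk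
  · exact le_rfl

/-- Lemma 4.3: with Q partitioned into Λ₁, Λ₂, Λ₃⁺, Λ₃ᶜ, Λ_u and M = BBᵀ, the
family of vectors in ℝ^Q × ℝ^Q consisting of (M_{i·}, e_i) for i ∈ Λ₃⁺ ∪ Λ₃ᶜ ∪ Λ_u,
(M_{i·}, e_i) for i ∈ Λ₁, (e_i, 0) for i ∈ Λ₁, (e_i, 0) for i ∈ Λ₂, (0, e_i) for
i ∈ Λ₃ᶜ, and (0, e_i) for i ∈ Λ₁ ∪ Λ₂ ∪ Λ₃⁺, is positive-linearly independent.
The zero combination is stated via its two ℝ^Q components. -/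
theorem lemma3_positive_linear_independence
    {ι : Type*} [Fintype ι] [DecidableEq ι]
    (Λ₁ Λ₂ Λ₃p Λ₃c Λu : Finset ι)
    (hdisj : List.Pairwise Disjoint [Λ₁, Λ₂, Λ₃p, Λ₃c, Λu])
    (hunion : Λ₁ ∪ Λ₂ ∪ Λ₃p ∪ Λ₃c ∪ Λu = Finset.univ)
    (n : ℕ) (hn : 0 < n) (B : Matrix ι (Fin n) ℝ)
    (M : Matrix ι ι ℝ) (hM : M = B * Bᵀ)
    (ρg ρh ρi ρj ρm ρn : ι → ℝ)
    (hg : ∀ i ∈ Λ₃p ∪ Λ₃c ∪ Λu, 0 ≤ ρg i) (hh : ∀ i ∈ Λ₁, 0 ≤ ρh i)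
    (hi : ∀ i ∈ Λ₁, 0 ≤ ρi i) (hj : ∀ i ∈ Λ₂, 0 ≤ ρj i)
    (hm : ∀ i ∈ Λ₃c, 0 ≤ ρm i) (hn' : ∀ i ∈ Λ₁ ∪ Λ₂ ∪ Λ₃p, 0 ≤ ρn i)
    (hsum1 : (∑ i ∈ Λ₃p ∪ Λ₃c ∪ Λu, ρg i • (M i : ι → ℝ))
        + (∑ i ∈ Λ₁, ρh i • (M i : ι → ℝ))
        + (∑ i ∈ Λ₁, ρi i • (Pi.single i 1 : ι → ℝ))
        + (∑ i ∈ Λ₂, ρj i • (Pi.single i 1 : ι → ℝ)) = 0)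
    (hsum2 : (∑ i ∈ Λ₃p ∪ Λ₃c ∪ Λu, ρg i • (Pi.single i 1 : ι → ℝ))
        + (∑ i ∈ Λ₁, ρh i • (Pi.single i 1 : ι → ℝ))
        + (∑ i ∈ Λ₃c, ρm i • (Pi.single i 1 : ι → ℝ))
        + (∑ i ∈ Λ₁ ∪ Λ₂ ∪ Λ₃p, ρn i • (Pi.single i 1 : ι → ℝ)) = 0) :
    (∀ i ∈ Λ₃p ∪ Λ₃c ∪ Λu, ρg i = 0) ∧ (∀ i ∈ Λ₁, ρh i = 0) ∧
    (∀ i ∈ Λ₁, ρi i = 0) ∧ (∀ i ∈ Λ₂, ρj i = 0) ∧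
    (∀ i ∈ Λ₃c, ρm i = 0) ∧ (∀ i ∈ Λ₁ ∪ Λ₂ ∪ Λ₃p, ρn i = 0) := by
  have key : ∀ k, _ := fun k => congrFun hsum2 k
  simp only [Pi.add_apply, sum_single_apply_aux, Pi.zero_apply] at key
  have g0 : ∀ i ∈ Λ₃p ∪ Λ₃c ∪ Λu, ρg i = 0 := by
    intro k hk
    have := key k
    have a := ite_nonneg_aux _ ρh hh k
    have b := ite_nonneg_aux _ ρm hm k
    have c := ite_nonneg_aux _ ρn hn' k
    have d := hg k hk
    rw [if_pos hk] at this
    linarith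
  have h0 : ∀ i ∈ Λ₁, ρh i = 0 := by
    intro k hk
    have := key k
    have a := ite_nonneg_aux _ ρg hg k
    have b := ite_nonneg_aux _ ρm hm k
    have c := ite_nonneg_aux _ ρn hn' k
    have d := hh k hk
    rw [if_pos hk] at this
    linarith
  have key1 : ∀ k, _ := fun k => congrFun hsum1 k
  rw [Finset.sum_eq_zero (fun i h => by rw [g0 i h, zero_smul]),
    Finset.sum_eq_zero (s := Λ₁) (f := fun i => ρh i • (M i : ι → ℝ))
      (fun i h => by rw [h0 i h, zero_smul])] at key1
  simp only [Pi.add_apply, sum_single_apply_aux, Pi.zero_apply] at key1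
  refine ⟨g0, h0, ?_, ?_, ?_, ?_⟩ <;> intro k hk
  · have := key1 k
    have a := ite_nonneg_aux _ ρj hj k
    have d := hi k hk
    rw [if_pos hk] at this
    linarith
  · have := key1 k
    have a := ite_nonneg_aux _ ρi hi k
    have d := hj k hk
    rw [if_pos hk] at this
    linarith
  · have := key k
    have a := ite_nonneg_aux _ ρg hg k
    have b := ite_nonneg_aux _ ρh hh k
    have c := ite_nonneg_aux _ ρn hn' k
    have d := hm k hk
    rw [if_pos hk] at this
    linarith
  · have := key k
    have a := ite_nonneg_aux _ ρg hg k
    have b := ite_nonneg_aux _ ρh hh k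
    have c := ite_nonneg_aux _ ρm hm k
    have d := hn' k hk
    rw [if_pos hk] at this
    linarith
end

section
/- Let A be a real p×n matrix, B a real q×n matrix, ζ, z ∈ ℝ^p and α ∈ ℝ^q, and set g = ABᵀα + z. Assume the feasibility conditions 0 ≤ ζ ⊥ g ≥ 0 and 0 ≤ z ⊥ 1 − ζ ≥ 0 hold, and assume the nondegeneracy condition that there is no index i with ζ_i = 1 and z_i = 0. Then the four sets Ψ₁⁰, Ψ₁⁺, Ψ₂, Ψ₃ are pairwise disjoint and their union is the whole index set {1, …, p}. -/
open Matrix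

/-- The sets Ψ₁⁰, Ψ₁⁺, Ψ₂, Ψ₃ arising from the upper-level complementarity
system are pairwise disjoint and partition the whole index set. -/
theorem psi_sets_partition
    (p q n : ℕ) (A : Matrix (Fin p) (Fin n) ℝ) (B : Matrix (Fin q) (Fin n) ℝ)
    (ζ z : Fin p → ℝ) (α : Fin q → ℝ)
    (g : Fin p → ℝ) (hg : g = (A * Bᵀ).mulVec α + z)
    (hfeas1 : ∀ i, 0 ≤ ζ i ∧ 0 ≤ g i ∧ ζ i * g i = 0)
    (hfeas2 : ∀ i, 0 ≤ z i ∧ 0 ≤ 1 - ζ i ∧ z i * (1 - ζ i) = 0)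
    (hnd : ¬ ∃ i, ζ i = 1 ∧ z i = 0) :
    List.Pairwise Disjoint
      ([{i | ζ i = 0 ∧ g i = 0 ∧ z i = 0},
        {i | (0 < ζ i ∧ ζ i < 1) ∧ g i = 0 ∧ z i = 0},
        {i | ζ i = 0 ∧ 0 < g i ∧ z i = 0},
        {i | ζ i = 1 ∧ g i = 0 ∧ 0 < z i}] : List (Set (Fin p))) ∧
    ({i | ζ i = 0 ∧ g i = 0 ∧ z i = 0} ∪
      {i | (0 < ζ i ∧ ζ i < 1) ∧ g i = 0 ∧ z i = 0} ∪
      {i | ζ i = 0 ∧ 0 < g i ∧ z i = 0} ∪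
      {i | ζ i = 1 ∧ g i = 0 ∧ 0 < z i}) = (Set.univ : Set (Fin p)) := by
  clear hg
  constructor
  · simp only [List.pairwise_cons, List.mem_cons, List.not_mem_nil, or_false, forall_eq_or_imp,
      forall_eq, Set.disjoint_left, Set.mem_setOf_eq, IsEmpty.forall_iff, implies_true,
      List.Pairwise.nil, and_true]
    refine ⟨⟨?_, ?_, ?_⟩, ⟨?_, ?_⟩, ?_⟩ <;> intro i h1 h2 <;>
      (obtain ⟨h1a, h1b, h1c⟩ := h1; obtain ⟨h2a, h2b, h2c⟩ := h2; grind)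
  · ext i
    simp only [Set.mem_union, Set.mem_setOf_eq, Set.mem_univ, iff_true]
    obtain ⟨a1, a2, a3⟩ := hfeas1 i
    obtain ⟨b1, b2, b3⟩ := hfeas2 i
    have hn : ¬ (ζ i = 1 ∧ z i = 0) := fun h => hnd ⟨i, h⟩
    rcases mul_eq_zero.mp a3 with h | h <;> rcases mul_eq_zero.mp b3 with h' | h' <;> grind
end
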